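/- Let n ≥ 1 and r ≥ 1, let φ : ℂ^n → ℂ be a smooth (C^∞) function with compact support, let α_1,…,α_r ∈ ℕ^n be multi-indices, and let β ∈ ℕ^n be a multi-index such that for each coordinate k with β_k > 0 there exists ℓ with α_{ℓ,k} > 0. Then there exist δ > 0, C > 0, and a function g : ℂ^r → ℂ analytic on {λ = (λ_1,…,λ_r) ∈ ℂ^r : Re λ_ℓ > −δ for all ℓ} such that for every λ ∈ ℂ^r with Re λ_ℓ > C for all ℓ, the function z ↦ Π_{ℓ=1}^r Π_{k=1}^n ‖z_k‖^{2 λ_ℓ α_{ℓ,k}} · Π_{k=1}^n z_k^{−β_k} · φ(z) is integrable on ℂ^n and g(λ) equals its integral over ℂ^n with respect to dV. -/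

import Mathlib

/-! In one variable, away from the origin,
`∂/∂z̄ (|z|^(2μ) z^(-b) z̄^(j+1)) = (μ + j + 1) |z|^(2μ) z^(-b) z̄^j`.
Integrating by parts therefore replaces `z̄^j` by `z̄^(j+1)` at the cost of differentiating the test
function and dividing by `-(μ + j + 1)`, which does not vanish for `Re μ > -1`. After `β k` such
steps in each coordinate the singular factor `z^(-β)` has become `(z̄/z)^β`, of modulus one, and the
integral against the differentiated test function converges and is analytic for `Re μ k > -1`.
Finally substitute `μ k = ∑ l, lam l * α l k`. -/

open MeasureTheory Filter Topology
open scoped NNReal ComplexConjugate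

section ParametricIntegral

variable {X E : Type*} [MeasurableSpace X] {ν : Measure X} [NormedAddCommGroup E]

theorem hasFPowerSeriesOnBall_integral {𝕜 G : Type*} [RCLike 𝕜] [NormedSpace 𝕜 E]
    [NormedAddCommGroup G] [NormedSpace ℝ G] [NormedSpace 𝕜 G]
    {F : X → E → G} {p : X → FormalMultilinearSeries 𝕜 E G} {a : E} {r : ℝ≥0} {bound : ℕ → X → ℝ}
    (hr : 0 < r) (hp : ∀ m, AEStronglyMeasurable (fun x => p x m) ν)
    (hbound : ∀ m, ∀ᵐ x ∂ν, ‖p x m‖ * r ^ m ≤ bound m x)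
    (hsum : ∀ᵐ x ∂ν, Summable fun m => bound m x)
    (hint : Integrable (fun x => ∑' m, bound m x) ν)
    (hF : ∀ᵐ x ∂ν, HasFPowerSeriesOnBall (F x) (p x) a r) :
    HasFPowerSeriesOnBall (fun y => ∫ x, F x y ∂ν) (fun m => ∫ x, p x m ∂ν) a r := by
  have hle_tsum (m : ℕ) : ∀ᵐ x ∂ν, ‖p x m‖ * r ^ m ≤ ∑' m, bound m x := by
    filter_upwards [ae_all_iff.2 hbound, hsum] with x hb hs
    exact (hb m).trans
      (hs.le_tsum m fun i _ => (mul_nonneg (norm_nonneg _) (by positivity)).trans (hb i))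
  have hp_int (m : ℕ) : Integrable (fun x => p x m) ν := by
    refine Integrable.mono' (hint.mul_const ((r : ℝ) ^ m)⁻¹) (hp m) ?_
    filter_upwards [hle_tsum m] with x hx
    rwa [← div_eq_mul_inv, le_div_iff₀ (by positivity)]
  refine ⟨?_, by exact_mod_cast hr, fun {y} hy => ?_⟩
  · refine FormalMultilinearSeries.le_radius_of_bound _ (∫ x, ∑' m, bound m x ∂ν) fun m => ?_
    calc ‖∫ x, p x m ∂ν‖ * r ^ m ≤ (∫ x, ‖p x m‖ ∂ν) * r ^ m := by
          gcongr; exact norm_integral_le_integral_norm _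
      _ = ∫ x, ‖p x m‖ * r ^ m ∂ν := (integral_mul_const _ _).symm
      _ ≤ ∫ x, ∑' m, bound m x ∂ν :=
          integral_mono_ae ((hp_int m).norm.mul_const _) hint (hle_tsum m)
  · have hy_norm : ‖y‖ ≤ r := by
      exact_mod_cast enorm_le_coe.1 (mem_eball_zero_iff.1 hy).le
    have happly (m : ℕ) : (∫ x, p x m ∂ν) (fun _ => y) = ∫ x, p x m (fun _ => y) ∂ν :=
      ContinuousMultilinearMap.integral_apply (hp_int m) _
    simp_rw [happly]
    refine hasSum_integral_of_dominated_convergence bound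
      (fun m => (ContinuousMultilinearMap.apply 𝕜 (fun _ : Fin m => E) G fun _ =>
        y).continuous.comp_aestronglyMeasurable (hp m)) (fun m => ?_) hsum hint
      (hF.mono fun x hx => hx.hasSum hy)
    filter_upwards [hbound m] with x hx
    refine (((p x m).le_opNorm _).trans ?_).trans hx
    simp only [Finset.prod_const, Finset.card_univ, Fintype.card_fin]
    gcongr

variable [NormedSpace ℂ E]

theorem norm_expSeries_le (m : ℕ) : ‖NormedSpace.expSeries ℂ ℂ m‖ ≤ (m.factorial : ℝ)⁻¹ := by
  simp [NormedSpace.expSeries, norm_smul]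

theorem hasFPowerSeriesOnBall_exp_clm_mul (ℓ : E →L[ℂ] ℂ) (c : ℂ) (a : E) {r : ℝ≥0} (hr : 0 < r) :
    HasFPowerSeriesOnBall (fun y => Complex.exp (ℓ y) * c)
      ((Complex.exp (ℓ a) * c) • (NormedSpace.expSeries ℂ ℂ).compContinuousLinearMap ℓ) a r where
  r_le := by
    refine le_trans ?_ FormalMultilinearSeries.radius_le_smul
    have h := FormalMultilinearSeries.div_le_radius_compContinuousLinearMap
      (NormedSpace.expSeries ℂ ℂ) ℓ
    rw [NormedSpace.expSeries_radius_eq_top, ENNReal.top_div_of_ne_top (by simp)] at h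
    exact le_top.trans h
  r_pos := by exact_mod_cast hr
  hasSum {y} _ := by
    have h := (NormedSpace.expSeries_hasSum_exp (𝕂 := ℂ) (ℓ y)).mul_left (Complex.exp (ℓ a) * c)
    rw [← Complex.exp_eq_exp_ℂ] at h
    rw [map_add, Complex.exp_add, mul_right_comm]
    exact h

theorem analyticAt_integral_exp_clm_mul {L : X → E →L[ℂ] ℂ} {w : X → ℂ} {a : E} {ε : ℝ}
    (hL : AEStronglyMeasurable L ν) (hw : AEStronglyMeasurable w ν) (hε : 0 < ε)
    (hint : Integrable (fun x => ‖w x‖ * Real.exp ((L x a).re + ε * ‖L x‖)) ν) :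
    AnalyticAt ℂ (fun y => ∫ x, Complex.exp (L x y) * w x ∂ν) a := by
  have hbound_sum (x : X) : HasSum
      (fun m : ℕ => ‖w x‖ * Real.exp (L x a).re * ((ε * ‖L x‖) ^ m / m.factorial))
      (‖w x‖ * Real.exp ((L x a).re + ε * ‖L x‖)) := by
    rw [Real.exp_add, ← mul_assoc, Real.exp_eq_exp_ℝ]
    exact (NormedSpace.expSeries_div_hasSum_exp (ε * ‖L x‖)).mul_left _
  have hpow (m : ℕ) : Continuous fun ℓ : E →L[ℂ] ℂ =>
      (NormedSpace.expSeries ℂ ℂ).compContinuousLinearMap ℓ m :=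
    ((NormedSpace.expSeries ℂ ℂ m).compContinuousLinearMapLRight (E := fun _ => E)).cont.comp
      (continuous_pi fun _ => continuous_id)
  have hLa : AEStronglyMeasurable (fun x => L x a) ν :=
    (ContinuousLinearMap.apply ℂ ℂ a).continuous.comp_aestronglyMeasurable hL
  refine (hasFPowerSeriesOnBall_integral (r := ⟨ε, hε.le⟩) hε (fun m => ?_) (fun m => ?_)
    (ae_of_all _ fun x => (hbound_sum x).summable) ?_
    (ae_of_all _ fun x => hasFPowerSeriesOnBall_exp_clm_mul (L x) (w x) a hε)).analyticAt
  · exact ((Complex.continuous_exp.comp_aestronglyMeasurable hLa).mul hw).smul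
      ((hpow m).comp_aestronglyMeasurable hL)
  · refine ae_of_all _ fun x => ?_
    have h : ‖(NormedSpace.expSeries ℂ ℂ).compContinuousLinearMap (L x) m‖ ≤
        (m.factorial : ℝ)⁻¹ * ‖L x‖ ^ m :=
      (FormalMultilinearSeries.norm_compContinuousLinearMap_le _ _ _).trans
        (by gcongr; exact norm_expSeries_le m)
    calc ‖((Complex.exp (L x a) * w x) •
          (NormedSpace.expSeries ℂ ℂ).compContinuousLinearMap (L x)) m‖ * ε ^ m
        ≤ ‖Complex.exp (L x a) * w x‖ * ((m.factorial : ℝ)⁻¹ * ‖L x‖ ^ m) * ε ^ m := by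
          rw [FormalMultilinearSeries.smul_apply, norm_smul]; gcongr
      _ = ‖w x‖ * Real.exp (L x a).re * ((ε * ‖L x‖) ^ m / m.factorial) := by
          rw [norm_mul, Complex.norm_exp]; ring
  · simpa only [(hbound_sum _).tsum_eq] using hint

end ParametricIntegral

theorem hasFDerivAt_zero_of_norm_le_norm_rpow {E F : Type*} [NormedAddCommGroup E]
    [InnerProductSpace ℝ E] [NormedAddCommGroup F] [NormedSpace ℝ F] {f : E → F} {p : ℝ}
    (hp : 1 < p) (hf : ∀ x, ‖f x‖ ≤ ‖x‖ ^ p) : HasFDerivAt f (0 : E →L[ℝ] F) 0 := by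
  have hp0 : p ≠ 0 := by positivity
  have hf0 : f 0 = 0 := by simpa [hp0] using hf 0
  have hnorm := (hasFDerivAt_norm_rpow (0 : E) hp).isLittleO
  simp only [norm_zero, Real.zero_rpow hp0, map_zero, smul_zero, zero_apply, sub_zero] at hnorm
  refine .of_isLittleO ?_
  simp only [hf0, zero_apply, sub_zero]
  exact (Asymptotics.isBigO_of_le _ fun x => (hf x).trans (le_abs_self _)).trans_isLittleO hnorm

section MonomialKernel

/-- The one-variable kernel `|z| ^ (2 * μ) * z ^ (-b) * conj z ^ j`. The exponents `b` and `j` are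
natural numbers because they are raised one at a time when integrating by parts. -/
noncomputable def monomialKernel (b j : ℕ) (μ z : ℂ) : ℂ :=
  ((‖z‖ ^ 2 : ℝ) : ℂ) ^ μ * z ^ (-(b : ℤ)) * conj z ^ j

variable {b j : ℕ} {μ z : ℂ}

theorem norm_monomialKernel (hz : z ≠ 0) :
    ‖monomialKernel b j μ z‖ = ‖z‖ ^ (2 * μ.re - b + j) := by
  have hz' : 0 < ‖z‖ := norm_pos_iff.2 hz
  rw [monomialKernel, norm_mul, norm_mul, norm_pow, norm_zpow, RCLike.norm_conj,
    Complex.norm_cpow_eq_rpow_re_of_pos (by positivity), Real.rpow_add hz', sub_eq_add_neg,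
    Real.rpow_add hz', Real.rpow_natCast, ← Real.rpow_natCast_mul hz'.le]
  norm_cast

theorem monomialKernel_zero (h : b < 2 * μ.re + j) : monomialKernel b j μ 0 = 0 := by
  rcases eq_or_ne j 0 with rfl | hj
  · rcases eq_or_ne b 0 with rfl | hb
    · have hμ : μ ≠ 0 := by rintro rfl; simp at h
      simp [monomialKernel, hμ]
    · simp [monomialKernel, hb]
  · simp [monomialKernel, hj]

theorem monomialKernel_eq_exp_mul (hz : z ≠ 0) :
    monomialKernel b j μ z =
      Complex.exp (Real.log (‖z‖ ^ 2) * μ) * monomialKernel b j 0 z := by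
  have h : ((‖z‖ ^ 2 : ℝ) : ℂ) ≠ 0 := by simpa using hz
  simp only [monomialKernel, Complex.cpow_def_of_ne_zero h, Complex.ofReal_log (sq_nonneg ‖z‖),
    mul_zero, Complex.exp_zero, one_mul, mul_assoc]

@[fun_prop]
theorem measurable_monomialKernel : Measurable (monomialKernel b j μ) := by
  have hconj : Measurable fun z : ℂ => conj z := Complex.continuous_conj.measurable
  unfold monomialKernel
  simp only [zpow_neg, zpow_natCast]
  fun_prop

theorem locallyIntegrable_monomialKernel (h : b < 2 * μ.re + j + 2) :
    LocallyIntegrable (monomialKernel b j μ) := by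
  refine locallyIntegrable_of_norm_le_rpow (C := 1) (α := b - 2 * μ.re - j)
    (by simp) (by rw [Complex.finrank_real_complex]; push_cast; linarith) ?_
    measurable_monomialKernel.aestronglyMeasurable
  filter_upwards [Measure.ae_ne volume 0] with z hz
  rw [norm_monomialKernel hz, one_mul]
  apply le_of_eq
  ring_nf

theorem hasFDerivAt_monomialKernel_of_ne_zero (hz : z ≠ 0) :
    HasFDerivAt (monomialKernel b (j + 1) μ)
      (((μ - b) * monomialKernel (b + 1) (j + 1) μ z) • (1 : ℂ →L[ℝ] ℂ) +
        ((μ + j + 1) * monomialKernel b j μ z) • (Complex.conjCLE : ℂ →L[ℝ] ℂ)) z := by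
  have hzc : conj z ≠ 0 := by simpa using hz
  have hnorm (w : ℂ) : w * conj w = ((‖w‖ ^ 2 : ℝ) : ℂ) := by
    rw [Complex.mul_conj']; norm_cast
  have hslit : z * conj z ∈ Complex.slitPlane := by
    rw [hnorm, Complex.ofReal_mem_slitPlane]; positivity
  have hid : HasFDerivAt (fun w : ℂ => w) (1 : ℂ →L[ℝ] ℂ) z := hasFDerivAt_id z
  have hconj : HasFDerivAt (fun w : ℂ => conj w) (Complex.conjCLE : ℂ →L[ℝ] ℂ) z :=
    Complex.conjCLE.hasFDerivAt
  have hcpow := (((hasDerivAt_id _).cpow_const (c := μ) hslit).comp_hasFDerivAt z (hid.mul hconj))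
  have hzpow := (hasDerivAt_zpow (-(b : ℤ)) z (Or.inl hz)).complexToReal_fderiv
  have hpow := (hasDerivAt_pow (j + 1) (conj z)).comp_hasFDerivAt z hconj
  have hfun : monomialKernel b (j + 1) μ =
      fun w => (w * conj w) ^ μ * w ^ (-(b : ℤ)) * conj w ^ (j + 1) := by
    funext w; rw [monomialKernel, hnorm]
  rw [hfun]
  refine ((hcpow.mul hzpow).mul hpow).congr_fderiv ?_
  ext v
  simp only [monomialKernel, ← hnorm, Complex.cpow_sub _ _ (mul_ne_zero hz hzc), Complex.cpow_one,
    zpow_sub₀ hz, zpow_neg, zpow_natCast, zpow_one, id_eq, Pi.mul_apply, Function.comp_apply,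
    add_tsub_cancel_right, Int.cast_neg, Int.cast_natCast, neg_mul,
    mul_one, add_apply, smul_apply, ContinuousLinearEquiv.coe_coe, Complex.conjCLE_apply,
    smul_eq_mul, one_apply_eq_self]
  generalize (z * conj z) ^ μ = N
  push_cast
  field_simp
  ring

theorem hasFDerivAt_monomialKernel_zero (h : b < 2 * μ.re + j) :
    HasFDerivAt (monomialKernel b (j + 1) μ) (0 : ℂ →L[ℝ] ℂ) 0 := by
  refine hasFDerivAt_zero_of_norm_le_norm_rpow (p := 2 * μ.re - b + (j + 1 : ℕ))
    (by push_cast; linarith) fun z => ?_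
  rcases eq_or_ne z 0 with rfl | hz
  · rw [monomialKernel_zero (by push_cast; linarith), norm_zero]
    positivity
  · exact (norm_monomialKernel hz).le

theorem hasFDerivAt_monomialKernel (h : b < 2 * μ.re + j) (z : ℂ) :
    HasFDerivAt (monomialKernel b (j + 1) μ)
      (((μ - b) * monomialKernel (b + 1) (j + 1) μ z) • (1 : ℂ →L[ℝ] ℂ) +
        ((μ + j + 1) * monomialKernel b j μ z) • (Complex.conjCLE : ℂ →L[ℝ] ℂ)) z := by
  rcases eq_or_ne z 0 with rfl | hz
  · rw [monomialKernel_zero h, monomialKernel_zero (by push_cast; linarith)]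
    exact (hasFDerivAt_monomialKernel_zero h).congr_fderiv (by ext; simp)
  · exact hasFDerivAt_monomialKernel_of_ne_zero hz

end MonomialKernel

section Dbar

variable {ι : Type*} [DecidableEq ι] {k : ι} {φ : (ι → ℂ) → ℂ}

/-- The antiholomorphic Wirtinger derivative `∂φ/∂z̄ₖ`. -/
noncomputable def dbar (k : ι) (φ : (ι → ℂ) → ℂ) (z : ι → ℂ) : ℂ :=
  1 / 2 * (fderiv ℝ φ z (Pi.single k 1) + Complex.I * fderiv ℝ φ z (Pi.single k Complex.I))

theorem hasCompactSupport_dbar (hsupp : HasCompactSupport φ) : HasCompactSupport (dbar k φ) :=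
  ((hsupp.fderiv_apply ℝ _).add (hsupp.fderiv_apply ℝ _).mul_left).mul_left

theorem contDiff_dbar [Fintype ι] {m n : WithTop ℕ∞} (hφ : ContDiff ℝ n φ) (hmn : m + 1 ≤ n) :
    ContDiff ℝ m (dbar k φ) := by
  have hdir (v : ι → ℂ) : ContDiff ℝ m fun z => fderiv ℝ φ z v :=
    (hφ.fderiv_right hmn).clm_apply contDiff_const
  exact contDiff_const.mul ((hdir _).add (contDiff_const.mul (hdir _)))

end Dbar

section PiMonomialKernel

variable {ι : Type*} [Fintype ι]

theorem locallyIntegrable_fintype_prod {X : ι → Type*} [∀ i, TopologicalSpace (X i)]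
    [∀ i, MeasurableSpace (X i)] {ν : ∀ i, Measure (X i)} [∀ i, SigmaFinite (ν i)] {𝕜 : Type*}
    [NormedCommRing 𝕜] {f : ∀ i, X i → 𝕜} (hf : ∀ i, LocallyIntegrable (f i) (ν i)) :
    LocallyIntegrable (fun x => ∏ i, f i (x i)) (Measure.pi ν) := by
  intro x
  choose s hs hfs using fun i => hf i (x i)
  refine ⟨Set.univ.pi s, set_pi_mem_nhds Set.finite_univ fun i _ => hs i, ?_⟩
  rw [IntegrableOn, Measure.restrict_pi_pi]
  exact Integrable.fintype_prod_dep hfs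

/-- The kernel `∏ k, |z k| ^ (2 * μ k) * z k ^ (-β k) * conj (z k) ^ γ k`. -/
noncomputable def piMonomialKernel (β γ : ι → ℕ) (μ z : ι → ℂ) : ℂ :=
  ∏ k, monomialKernel (β k) (γ k) (μ k) (z k)

variable {β γ : ι → ℕ} {μ z : ι → ℂ} {φ : (ι → ℂ) → ℂ}

theorem measurable_piMonomialKernel : Measurable (piMonomialKernel β γ μ) := by
  unfold piMonomialKernel
  fun_prop

theorem integrable_piMonomialKernel_mul (h : ∀ k, β k < 2 * (μ k).re + γ k + 2)
    (hφ : Continuous φ) (hsupp : HasCompactSupport φ) :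
    Integrable fun z => piMonomialKernel β γ μ z * φ z :=
  (locallyIntegrable_fintype_prod fun k =>
    locallyIntegrable_monomialKernel (h k)).integrable_smul_right_of_hasCompactSupport hφ hsupp

variable [DecidableEq ι] {k : ι}

theorem piMonomialKernel_add_single (b j : ℕ) (w : ℂ) :
    piMonomialKernel (β + Pi.single k b) (γ + Pi.single k j) μ (z + Pi.single k w) =
      monomialKernel (β k + b) (γ k + j) (μ k) (z k + w) *
        ∏ i ∈ Finset.univ.erase k, monomialKernel (β i) (γ i) (μ i) (z i) := by
  rw [piMonomialKernel, ← Finset.mul_prod_erase _ _ (Finset.mem_univ k)]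
  congr 1
  · simp
  · refine Finset.prod_congr rfl fun i hi => ?_
    simp [Finset.ne_of_mem_erase hi]

theorem hasLineDerivAt_piMonomialKernel (h : β k < 2 * (μ k).re + γ k) (v : ℂ) :
    HasLineDerivAt ℝ (piMonomialKernel β (γ + Pi.single k 1) μ)
      (v * (μ k - β k) * piMonomialKernel (β + Pi.single k 1) (γ + Pi.single k 1) μ z +
        conj v * (μ k + γ k + 1) * piMonomialKernel β γ μ z) z (Pi.single k v) := by
  have hker := piMonomialKernel_add_single (β := β) (γ := γ) (μ := μ) (z := z) (k := k)
  have hline := ((hasFDerivAt_monomialKernel h (z k)).hasLineDerivAt v).mul_const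
    (∏ i ∈ Finset.univ.erase k, monomialKernel (β i) (γ i) (μ i) (z i))
  have h11 := hker 1 1 0
  have h00 := hker 0 0 0
  have h01 := fun t : ℝ => hker 0 1 (t • v)
  simp only [Pi.single_zero, add_zero] at h11 h00 h01
  simp only [HasLineDerivAt, ← Pi.single_smul, h01, h11, h00]
  refine hline.congr_deriv ?_
  simp only [add_apply, smul_apply, one_apply_eq_self, smul_eq_mul,
    ContinuousLinearEquiv.coe_coe, ContinuousAlgEquiv.coeCLE_apply, Complex.conjCAE_apply]
  ring

theorem integrable_piMonomialKernel_add_single_mul (h : ∀ i, β i < 2 * (μ i).re + γ i + 2)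
    {b j : ℕ} (hbj : b ≤ j) (hφ : Continuous φ) (hsupp : HasCompactSupport φ) :
    Integrable fun z => piMonomialKernel (β + Pi.single k b) (γ + Pi.single k j) μ z * φ z := by
  refine integrable_piMonomialKernel_mul (fun i => ?_) hφ hsupp
  have hle : Pi.single (M := fun _ => ℕ) k b i ≤ Pi.single (M := fun _ => ℕ) k j i :=
    Pi.single_mono k hbj i
  rw [← Nat.cast_le (α := ℝ)] at hle
  simp only [Pi.add_apply, Nat.cast_add]
  linarith [h i]

theorem integrable_piMonomialKernel_mul_fderiv (h : ∀ i, β i < 2 * (μ i).re + γ i + 2)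
    (hφ : ContDiff ℝ 1 φ) (hsupp : HasCompactSupport φ) (v : ι → ℂ) :
    Integrable fun z => piMonomialKernel β (γ + Pi.single k 1) μ z * fderiv ℝ φ z v := by
  simpa only [Pi.single_zero, add_zero] using
    integrable_piMonomialKernel_add_single_mul (k := k) h zero_le_one
      ((hφ.continuous_fderiv one_ne_zero).clm_apply continuous_const) (hsupp.fderiv_apply ℝ v)

theorem integral_piMonomialKernel_mul_fderiv (h : ∀ i, β i < 2 * (μ i).re + γ i + 2)
    (hk : β k < 2 * (μ k).re + γ k) (hφ : ContDiff ℝ 1 φ) (hsupp : HasCompactSupport φ) (v : ℂ) :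
    ∫ z, piMonomialKernel β (γ + Pi.single k 1) μ z * fderiv ℝ φ z (Pi.single k v) =
      -(v * (μ k - β k) *
          (∫ z, piMonomialKernel (β + Pi.single k 1) (γ + Pi.single k 1) μ z * φ z) +
        conj v * (μ k + γ k + 1) * ∫ z, piMonomialKernel β γ μ z * φ z) := by
  have h00 := integrable_piMonomialKernel_mul h hφ.continuous hsupp
  have h11 := integrable_piMonomialKernel_add_single_mul (k := k) (b := 1) h le_rfl
    hφ.continuous hsupp
  have h01 := integrable_piMonomialKernel_add_single_mul (k := k) h zero_le_one
    hφ.continuous hsupp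
  simp only [Pi.single_zero, add_zero] at h01
  have hsum := (h11.const_mul (v * (μ k - β k))).fun_add (h00.const_mul (conj v * (μ k + γ k + 1)))
  rw [← integral_const_mul, ← integral_const_mul,
    ← integral_add (h11.const_mul _) (h00.const_mul _)]
  simp only [← mul_assoc, ← add_mul] at hsum ⊢
  exact integral_bilinear_hasLineDerivAt_right_eq_neg_left_of_integrable
    (B := ContinuousLinearMap.mul ℝ ℂ) (μ := volume) hsum
    (integrable_piMonomialKernel_mul_fderiv h hφ hsupp _) h01
    (fun z _ => hasLineDerivAt_piMonomialKernel hk v)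
    (fun z _ => ((hφ.differentiable one_ne_zero) z).hasFDerivAt.hasLineDerivAt _)

theorem integral_piMonomialKernel_mul_dbar (h : ∀ i, β i < 2 * (μ i).re + γ i + 2)
    (hk : β k < 2 * (μ k).re + γ k) (hφ : ContDiff ℝ 1 φ) (hsupp : HasCompactSupport φ) :
    ∫ z, piMonomialKernel β (γ + Pi.single k 1) μ z * dbar k φ z =
      -(μ k + γ k + 1) * ∫ z, piMonomialKernel β γ μ z * φ z := by
  have hdir (v : ℂ) := integrable_piMonomialKernel_mul_fderiv (k := k) h hφ hsupp (Pi.single k v)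
  have hsplit : ∫ z, piMonomialKernel β (γ + Pi.single k 1) μ z * dbar k φ z =
      1 / 2 * ((∫ z, piMonomialKernel β (γ + Pi.single k 1) μ z * fderiv ℝ φ z (Pi.single k 1)) +
        Complex.I * ∫ z, piMonomialKernel β (γ + Pi.single k 1) μ z *
          fderiv ℝ φ z (Pi.single k Complex.I)) := by
    rw [← integral_const_mul, ← integral_add (hdir 1) ((hdir Complex.I).const_mul _),
      ← integral_const_mul]
    congr! 2
    rw [dbar]
    ring
  rw [hsplit, integral_piMonomialKernel_mul_fderiv h hk hφ hsupp,
    integral_piMonomialKernel_mul_fderiv h hk hφ hsupp, map_one, Complex.conj_I]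
  linear_combination (1 / 2) * ((μ k + γ k + 1) * (∫ z, piMonomialKernel β γ μ z * φ z) -
    (μ k - β k) * ∫ z, piMonomialKernel (β + Pi.single k 1) (γ + Pi.single k 1) μ z * φ z) *
      Complex.I_mul_I

end PiMonomialKernel

section Analyticity

theorem norm_monomialKernel_zero_mul_exp_le {b j : ℕ} {z : ℂ} (hz : z ≠ 0) (μ : ℂ) (ε : ℝ) :
    ‖monomialKernel b j 0 z‖ *
        Real.exp (Real.log (‖z‖ ^ 2) * μ.re + |ε * Real.log (‖z‖ ^ 2)|) ≤
      ‖monomialKernel b j (μ + ε) z‖ + ‖monomialKernel b j (μ - ε) z‖ := by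
  have hnorm (ν : ℂ) : ‖monomialKernel b j ν z‖ =
      ‖monomialKernel b j 0 z‖ * Real.exp (Real.log (‖z‖ ^ 2) * ν.re) := by
    rw [monomialKernel_eq_exp_mul hz, norm_mul, Complex.norm_exp, Complex.re_ofReal_mul, mul_comm]
  rw [hnorm (μ + ε), hnorm (μ - ε), ← mul_add]
  gcongr
  rw [Real.exp_add, Complex.add_re, Complex.sub_re, Complex.ofReal_re, mul_add, mul_sub,
    sub_eq_add_neg, Real.exp_add, Real.exp_add, ← mul_add, mul_comm ε]
  gcongr
  exact Real.exp_abs_le _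

variable {ι : Type*} [Fintype ι] {β γ : ι → ℕ} {μ z : ι → ℂ} {ψ : (ι → ℂ) → ℂ}

/-- The linear form `μ ↦ ∑ k, μ k * log (|z k| ^ 2)`, whose exponential is `∏ k, |z k| ^ (2 * μ k)`
whenever no coordinate of `z` vanishes. -/
noncomputable def logNormForm (z : ι → ℂ) : (ι → ℂ) →L[ℂ] ℂ :=
  ∑ k, (Real.log (‖z k‖ ^ 2) : ℂ) • ContinuousLinearMap.proj k

theorem logNormForm_apply : logNormForm z μ = ∑ k, Real.log (‖z k‖ ^ 2) * μ k := by
  simp [logNormForm]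

theorem norm_logNormForm_le : ‖logNormForm z‖ ≤ ∑ k, |Real.log (‖z k‖ ^ 2)| := by
  refine ContinuousLinearMap.opNorm_le_bound _ (by positivity) fun μ => ?_
  rw [logNormForm_apply, Finset.sum_mul]
  refine norm_sum_le_of_le _ fun k _ => ?_
  rw [norm_mul, Complex.norm_real, Real.norm_eq_abs]
  gcongr
  exact norm_le_pi_norm μ k

theorem stronglyMeasurable_logNormForm :
    StronglyMeasurable (logNormForm : (ι → ℂ) → (ι → ℂ) →L[ℂ] ℂ) := by
  unfold logNormForm
  refine Finset.stronglyMeasurable_fun_sum _ fun k _ => ?_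
  refine Measurable.stronglyMeasurable ?_ |>.smul_const _
  fun_prop

theorem piMonomialKernel_eq_exp_mul (hz : ∀ k, z k ≠ 0) :
    piMonomialKernel β γ μ z = Complex.exp (logNormForm z μ) * piMonomialKernel β γ 0 z := by
  rw [logNormForm_apply, Complex.exp_sum, piMonomialKernel, piMonomialKernel,
    ← Finset.prod_mul_distrib]
  exact Finset.prod_congr rfl fun k _ => monomialKernel_eq_exp_mul (hz k)

theorem norm_piMonomialKernel_zero_mul_exp_le (hz : ∀ k, z k ≠ 0) (μ : ι → ℂ) {ε : ℝ}
    (hε : 0 ≤ ε) :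
    ‖piMonomialKernel β γ 0 z‖ * Real.exp ((logNormForm z μ).re + ε * ‖logNormForm z‖) ≤
      ∏ k, (‖monomialKernel (β k) (γ k) (μ k + ε) (z k)‖ +
        ‖monomialKernel (β k) (γ k) (μ k - ε) (z k)‖) := by
  calc ‖piMonomialKernel β γ 0 z‖ * Real.exp ((logNormForm z μ).re + ε * ‖logNormForm z‖)
      ≤ ‖piMonomialKernel β γ 0 z‖ *
          Real.exp ((logNormForm z μ).re + ε * ∑ k, |Real.log (‖z k‖ ^ 2)|) := by
        gcongr; exact norm_logNormForm_le
    _ = ∏ k, ‖monomialKernel (β k) (γ k) 0 (z k)‖ *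
          Real.exp (Real.log (‖z k‖ ^ 2) * (μ k).re + |ε * Real.log (‖z k‖ ^ 2)|) := by
        simp only [piMonomialKernel, norm_prod, logNormForm_apply, Complex.re_sum,
          Complex.re_ofReal_mul, Finset.mul_sum, ← Finset.sum_add_distrib, Real.exp_sum,
          Finset.prod_mul_distrib, abs_mul, abs_of_nonneg hε, Pi.zero_apply]
    _ ≤ _ := Finset.prod_le_prod (fun k _ => by positivity)
        fun k _ => norm_monomialKernel_zero_mul_exp_le (hz k) (μ k) ε

theorem ae_forall_ne (c : ι → ℂ) : ∀ᵐ z : ι → ℂ, ∀ k, z k ≠ c k :=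
  ae_all_iff.2 fun k => Measure.ae_eval_ne (α := fun _ => ℂ) (fun _ => volume) k (c k)

theorem integral_piMonomialKernel_mul_eq_integral_exp_mul :
    ∫ z, piMonomialKernel β γ μ z * ψ z =
      ∫ z, Complex.exp (logNormForm z μ) * (piMonomialKernel β γ 0 z * ψ z) := by
  refine integral_congr_ae ?_
  filter_upwards [ae_forall_ne 0] with z hz
  rw [piMonomialKernel_eq_exp_mul hz, mul_assoc]

theorem integrable_prod_norm_monomialKernel_mul_norm {ε : ℝ} (hε : 0 ≤ ε)
    (h : ∀ k, β k < 2 * ((μ k).re - ε) + γ k + 2) (hψ : Continuous ψ)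
    (hsupp : HasCompactSupport ψ) :
    Integrable fun z => (∏ k, (‖monomialKernel (β k) (γ k) (μ k + ε) (z k)‖ +
      ‖monomialKernel (β k) (γ k) (μ k - ε) (z k)‖)) * ‖ψ z‖ := by
  have hloc (k : ι) : LocallyIntegrable fun z : ℂ =>
      ‖monomialKernel (β k) (γ k) (μ k + ε) z‖ + ‖monomialKernel (β k) (γ k) (μ k - ε) z‖ := by
    have hadd : β k < 2 * (μ k + ε).re + γ k + 2 := by
      rw [Complex.add_re, Complex.ofReal_re]
      linarith [h k]
    have hsub : β k < 2 * (μ k - ε).re + γ k + 2 := by simpa using h k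
    exact LocallyIntegrable.add (fun x => (locallyIntegrable_monomialKernel hadd x).norm)
      (fun x => (locallyIntegrable_monomialKernel hsub x).norm)
  exact (locallyIntegrable_fintype_prod hloc).integrable_smul_right_of_hasCompactSupport
    hψ.norm hsupp.norm

theorem integrable_norm_piMonomialKernel_zero_mul_exp {ε : ℝ} (hε : 0 ≤ ε)
    (h : ∀ k, β k < 2 * ((μ k).re - ε) + γ k + 2) (hψ : Continuous ψ)
    (hsupp : HasCompactSupport ψ) :
    Integrable fun z => ‖piMonomialKernel β γ 0 z * ψ z‖ *
      Real.exp ((logNormForm z μ).re + ε * ‖logNormForm z‖) := by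
  refine (integrable_prod_norm_monomialKernel_mul_norm hε h hψ hsupp).mono' ?_ ?_
  · have hmeas : AEStronglyMeasurable (fun z => piMonomialKernel β γ 0 z * ψ z) :=
      measurable_piMonomialKernel.aestronglyMeasurable.mul hψ.aestronglyMeasurable
    have hform : AEStronglyMeasurable (logNormForm : (ι → ℂ) → (ι → ℂ) →L[ℂ] ℂ) :=
      stronglyMeasurable_logNormForm.aestronglyMeasurable
    have happly := (ContinuousLinearMap.apply ℂ ℂ μ).continuous.comp_aestronglyMeasurable hform
    exact hmeas.norm.mul (Real.continuous_exp.comp_aestronglyMeasurable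
      ((Complex.continuous_re.comp_aestronglyMeasurable happly).add (hform.norm.const_mul ε)))
  · filter_upwards [ae_forall_ne 0] with z hz
    rw [Real.norm_of_nonneg (by positivity), norm_mul, mul_right_comm]
    gcongr
    exact norm_piMonomialKernel_zero_mul_exp_le hz μ hε

theorem analyticOnNhd_integral_piMonomialKernel_mul (hψ : Continuous ψ)
    (hsupp : HasCompactSupport ψ) :
    AnalyticOnNhd ℂ (fun μ => ∫ z, piMonomialKernel β γ μ z * ψ z)
      {μ | ∀ k, β k < 2 * (μ k).re + γ k + 2} := by
  intro μ hμ
  obtain ⟨ε, hε, hμε⟩ : ∃ ε > 0, ∀ k, β k < 2 * ((μ k).re - ε) + γ k + 2 := by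
    have hnear : ∀ᶠ ε : ℝ in 𝓝 0, ∀ k, β k < 2 * ((μ k).re - ε) + γ k + 2 :=
      eventually_all.2 fun k => ContinuousAt.eventually_lt (by fun_prop) (by fun_prop)
        (by simpa using hμ k)
    exact ((eventually_mem_nhdsWithin (s := Set.Ioi 0)).and
      (hnear.filter_mono nhdsWithin_le_nhds)).exists
  simp only [integral_piMonomialKernel_mul_eq_integral_exp_mul]
  exact analyticAt_integral_exp_clm_mul stronglyMeasurable_logNormForm.aestronglyMeasurable
    (measurable_piMonomialKernel.aestronglyMeasurable.mul hψ.aestronglyMeasurable) hε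
    (integrable_norm_piMonomialKernel_zero_mul_exp hε.le hμε hψ hsupp)

end Analyticity

section Continuation

theorem induction_add_single {ι : Type*} [Finite ι] [DecidableEq ι] {p : (ι → ℕ) → Prop}
    (zero : p 0) (add_single : ∀ f k, p f → p (f + Pi.single k 1)) (f : ι → ℕ) : p f := by
  suffices h : ∀ g, p g → p (g + f) by simpa using h 0 zero
  refine Pi.single_induction (fun f => ∀ g, p g → p (g + f)) f (by simp)
    (fun f₁ f₂ h₁ h₂ g hg => add_assoc g f₁ f₂ ▸ h₂ _ (h₁ g hg)) fun k m => ?_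
  induction m with
  | zero => simp
  | succ m ih =>
    intro g hg
    rw [Pi.single_add, ← add_assoc]
    exact add_single _ _ (ih g hg)

theorem add_natCast_add_one_ne_zero {w : ℂ} (hw : -1 < w.re) (m : ℕ) : w + m + 1 ≠ 0 := by
  intro h
  have hre := congrArg Complex.re h
  simp only [Complex.add_re, Complex.natCast_re, Complex.one_re, Complex.zero_re] at hre
  linarith [m.cast_nonneg (α := ℝ)]

theorem exists_analyticOnNhd_integral_piMonomialKernel_mul {ι : Type*} [Fintype ι]
    {γ : ι → ℕ} (δ : ι → ℕ) {φ : (ι → ℂ) → ℂ}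
    (hφ : ContDiff ℝ (∑ k, δ k : ℕ) φ) (hsupp : HasCompactSupport φ) :
    ∃ g : (ι → ℂ) → ℂ, AnalyticOnNhd ℂ g {μ | ∀ k, -1 < (μ k).re} ∧
      ∀ μ : ι → ℂ, (∀ k, (γ + δ) k ≤ (μ k).re) →
        g μ = ∫ z, piMonomialKernel (γ + δ) γ μ z * φ z := by
  classical
  induction δ using induction_add_single generalizing γ φ with
  | zero =>
    refine ⟨_, (analyticOnNhd_integral_piMonomialKernel_mul hφ.continuous hsupp).mono ?_,
      fun _ _ => rfl⟩
    intro μ hμ k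
    simp only [add_zero]
    linarith [hμ k]
  | add_single δ k ih =>
    have hsum : ∑ i, (δ + Pi.single k 1 : ι → ℕ) i = (∑ i, δ i) + 1 := by
      simp [Finset.sum_add_distrib]
    have hadd : γ + Pi.single k 1 + δ = γ + (δ + Pi.single k 1) := by abel
    rw [hsum] at hφ
    obtain ⟨g, hg, hgint⟩ := ih (γ := γ + Pi.single k 1) (φ := dbar k φ)
      (contDiff_dbar hφ (by push_cast; rfl)) (hasCompactSupport_dbar hsupp)
    have hne {μ : ι → ℂ} (hμ : -1 < (μ k).re) : -(μ k + γ k + 1) ≠ 0 :=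
      neg_ne_zero.2 (add_natCast_add_one_ne_zero hμ (γ k))
    refine ⟨fun μ => (-(μ k + γ k + 1))⁻¹ * g μ, fun μ hμ => ?_, fun μ hμ => ?_⟩
    · have hproj : AnalyticAt ℂ (fun μ : ι → ℂ => μ k) μ :=
        (ContinuousLinearMap.proj (R := ℂ) (φ := fun _ : ι => ℂ) k).analyticAt μ
      exact ((hproj.add analyticAt_const).add analyticAt_const).neg.inv (hne (hμ k))
        |>.mul (hg μ hμ)
    · have hre (i : ι) : 0 ≤ (μ i).re := (Nat.cast_nonneg _).trans (hμ i)
      have hpos : 0 < (μ k).re := by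
        refine lt_of_lt_of_le ?_ (hμ k)
        simp only [Pi.add_apply, Pi.single_eq_same]
        positivity
      calc (-(μ k + γ k + 1))⁻¹ * g μ
          = (-(μ k + γ k + 1))⁻¹ * (-(μ k + γ k + 1) *
              ∫ z, piMonomialKernel (γ + (δ + Pi.single k 1)) γ μ z * φ z) := by
            rw [hgint μ (hadd ▸ hμ), hadd,
              integral_piMonomialKernel_mul_dbar (fun i => by linarith [hμ i, hre i])
                (by linarith [hμ k]) (hφ.of_le (by simp)) hsupp]
        _ = ∫ z, piMonomialKernel (γ + (δ + Pi.single k 1)) γ μ z * φ z :=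
            inv_mul_cancel_left₀ (hne (by linarith)) _

end Continuation

section MultiParameter

variable {ι κ : Type*} [Fintype κ]

theorem ofReal_cpow_sum {x : ℝ} (hx : 0 < x) (w : κ → ℂ) :
    (x : ℂ) ^ ∑ l, w l = ∏ l, (x : ℂ) ^ w l := by
  have hx' : (x : ℂ) ≠ 0 := by exact_mod_cast hx.ne'
  simp only [Complex.cpow_def_of_ne_zero hx', Finset.mul_sum, Complex.exp_sum]

/-- The exponents `μ k = ∑ l, lam l * α l k` of a product of powers `|z ^ α l| ^ (2 * lam l)`,
as a linear map in `lam`. -/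
noncomputable def exponentMap (α : κ → ι → ℝ) : (κ → ℂ) →L[ℂ] (ι → ℂ) :=
  ContinuousLinearMap.pi fun k => ∑ l, (α l k : ℂ) • ContinuousLinearMap.proj l

variable {α : κ → ι → ℝ} {lam : κ → ℂ} {z : ι → ℂ}

theorem exponentMap_apply (k : ι) : exponentMap α lam k = ∑ l, lam l * α l k := by
  simp [exponentMap, mul_comm]

theorem re_exponentMap (k : ι) : (exponentMap α lam k).re = ∑ l, (lam l).re * α l k := by
  simp [exponentMap_apply]

theorem exists_pos_forall_neg_one_lt_re_exponentMap [Finite ι] (hα : ∀ l k, 0 ≤ α l k) :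
    ∃ δ > (0 : ℝ), ∀ lam : κ → ℂ, (∀ l, -δ < (lam l).re) →
      ∀ k, -1 < (exponentMap α lam k).re := by
  cases nonempty_fintype ι
  have hA : 0 ≤ ∑ k, ∑ l, α l k := Finset.sum_nonneg fun k _ => Finset.sum_nonneg fun l _ => hα l k
  refine ⟨(1 + ∑ k, ∑ l, α l k)⁻¹, by positivity, fun lam hlam k => ?_⟩
  have hk : ∑ l, α l k ≤ ∑ k, ∑ l, α l k :=
    Finset.single_le_sum (fun k _ => Finset.sum_nonneg fun l _ => hα l k) (Finset.mem_univ k)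
  calc -1 < -((1 + ∑ k, ∑ l, α l k)⁻¹ * ∑ l, α l k) := by
        rw [neg_lt_neg_iff, inv_mul_lt_iff₀ (by positivity)]
        linarith
    _ = ∑ l, -(1 + ∑ k, ∑ l, α l k)⁻¹ * α l k := by rw [← Finset.mul_sum, neg_mul]
    _ ≤ (exponentMap α lam k).re := by
        rw [re_exponentMap]
        gcongr with l
        exacts [hα l k, (hlam l).le]

theorem exists_pos_forall_le_re_exponentMap [Finite ι] (hα : ∀ l k, 0 ≤ α l k) {b : ι → ℝ}
    (hb : 0 ≤ b) (hpos : ∀ k, 0 < b k → ∃ l, 0 < α l k) :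
    ∃ C > (0 : ℝ), ∀ lam : κ → ℂ, (∀ l, C < (lam l).re) →
      ∀ k, b k ≤ (exponentMap α lam k).re := by
  cases nonempty_fintype ι
  have hdiv (l : κ) (k : ι) : 0 ≤ b k / α l k := div_nonneg (hb k) (hα l k)
  have hsum : 0 ≤ ∑ l, ∑ k, b k / α l k :=
    Finset.sum_nonneg fun l _ => Finset.sum_nonneg fun k _ => hdiv l k
  refine ⟨1 + ∑ l, ∑ k, b k / α l k, by positivity, fun lam hlam k => ?_⟩
  have hterm (l : κ) : 0 ≤ (lam l).re * α l k :=
    mul_nonneg (by linarith [hlam l]) (hα l k)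
  rw [re_exponentMap]
  rcases (hb k).eq_or_lt with h0 | h0
  · exact h0 ▸ Finset.sum_nonneg fun l _ => hterm l
  obtain ⟨l, hl⟩ := hpos k h0
  have hle : b k / α l k ≤ (lam l).re :=
    calc b k / α l k ≤ ∑ k, b k / α l k :=
          Finset.single_le_sum (fun k _ => hdiv l k) (Finset.mem_univ k)
      _ ≤ ∑ l, ∑ k, b k / α l k :=
          Finset.single_le_sum (f := fun l => ∑ k, b k / α l k)
            (fun l _ => Finset.sum_nonneg fun k _ => hdiv l k) (Finset.mem_univ l)
      _ ≤ (lam l).re := by linarith [hlam l]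
  exact ((div_le_iff₀ hl).1 hle).trans
    (Finset.single_le_sum (fun l _ => hterm l) (Finset.mem_univ l))

variable [Fintype ι]

theorem prod_cpow_mul_prod_zpow_eq_piMonomialKernel (β : ι → ℕ) (hz : ∀ k, z k ≠ 0) :
    (∏ l, ∏ k, ((‖z k‖ ^ 2 : ℝ) : ℂ) ^ (lam l * α l k)) * ∏ k, z k ^ (-(β k : ℤ)) =
      piMonomialKernel β 0 (exponentMap α lam) z := by
  rw [Finset.prod_comm, ← Finset.prod_mul_distrib, piMonomialKernel]
  refine Finset.prod_congr rfl fun k _ => ?_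
  have hpos : 0 < ‖z k‖ ^ 2 := by have := hz k; positivity
  rw [← ofReal_cpow_sum hpos, monomialKernel, exponentMap_apply, Pi.zero_apply, pow_zero, mul_one]

theorem stmt12_general (φ : (ι → ℂ) → ℂ) (β : ι → ℕ) (hφ : ContDiff ℝ (∑ k, β k : ℕ) φ)
    (hsupp : HasCompactSupport φ) (α : κ → ι → ℝ) (hα : ∀ l k, 0 ≤ α l k)
    (hβ : ∀ k, 0 < β k → ∃ l, 0 < α l k) :
    ∃ δ > (0 : ℝ), ∃ C > (0 : ℝ), ∃ g : (κ → ℂ) → ℂ,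
      AnalyticOnNhd ℂ g {lam | ∀ l, -δ < (lam l).re} ∧
      ∀ lam : κ → ℂ, (∀ l, C < (lam l).re) →
        Integrable (fun z : ι → ℂ =>
          (∏ l, ∏ k, ((‖z k‖ ^ 2 : ℝ) : ℂ) ^ (lam l * α l k)) *
            (∏ k, z k ^ (-(β k : ℤ))) * φ z) ∧
        g lam = ∫ z : ι → ℂ,
          (∏ l, ∏ k, ((‖z k‖ ^ 2 : ℝ) : ℂ) ^ (lam l * α l k)) *
            (∏ k, z k ^ (-(β k : ℤ))) * φ z := by
  obtain ⟨g, hg, hgint⟩ :=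
    exists_analyticOnNhd_integral_piMonomialKernel_mul (γ := 0) β hφ hsupp
  rw [zero_add] at hgint
  obtain ⟨δ, hδ, hδ_re⟩ := exists_pos_forall_neg_one_lt_re_exponentMap hα
  obtain ⟨C, hC, hC_re⟩ := exists_pos_forall_le_re_exponentMap hα (b := fun k => β k)
    (fun k => (β k).cast_nonneg) (by exact_mod_cast hβ)
  refine ⟨δ, hδ, C, hC, g ∘ exponentMap α, fun lam hlam =>
    (hg _ (hδ_re lam hlam)).comp ((exponentMap α).analyticAt lam), fun lam hlam => ?_⟩
  have hle := hC_re lam hlam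
  have hae : (fun z => piMonomialKernel β 0 (exponentMap α lam) z * φ z) =ᵐ[volume] fun z =>
      (∏ l, ∏ k, ((‖z k‖ ^ 2 : ℝ) : ℂ) ^ (lam l * α l k)) * (∏ k, z k ^ (-(β k : ℤ))) * φ z := by
    filter_upwards [ae_forall_ne 0] with z hz
    rw [prod_cpow_mul_prod_zpow_eq_piMonomialKernel β hz]
  refine ⟨(integrable_piMonomialKernel_mul (fun k => ?_) hφ.continuous hsupp).congr hae,
    (hgint _ hle).trans (integral_congr_ae hae)⟩
  simp only [Pi.zero_apply, Nat.cast_zero, add_zero]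
  linarith [hle k, (β k).cast_nonneg (α := ℝ)]

end MultiParameter

open MeasureTheory in
/-- joint analytic continuation of
`λ ↦ ∫_{ℂ^n} ∏_ℓ |x^{α_ℓ}|^{2λ_ℓ} · x^{-β} · φ dV` to a neighborhood
`{Re λ_ℓ > -δ ∀ℓ}` of the origin of `ℂ^r`. -/
theorem stmt12 (n r : ℕ) (hn : 1 ≤ n) (hr : 1 ≤ r)
    (φ : (Fin n → ℂ) → ℂ) (hφ : ContDiff ℝ (⊤ : ℕ∞) φ) (hsupp : HasCompactSupport φ)
    (α : Fin r → Fin n → ℕ) (β : Fin n → ℕ)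
    (hβ : ∀ k : Fin n, 0 < β k → ∃ l : Fin r, 0 < α l k) :
    ∃ δ > (0 : ℝ), ∃ C > (0 : ℝ), ∃ g : (Fin r → ℂ) → ℂ,
      AnalyticOnNhd ℂ g {lam : Fin r → ℂ | ∀ l, -δ < (lam l).re} ∧
      ∀ lam : Fin r → ℂ, (∀ l, C < (lam l).re) →
        Integrable (fun z : Fin n → ℂ =>
          (∏ l : Fin r, ∏ k : Fin n,
            ((‖z k‖ ^ 2 : ℝ) : ℂ) ^ (lam l * (α l k : ℂ))) *
          (∏ k : Fin n, (z k) ^ (-(β k : ℤ))) * φ z) ∧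
        g lam = ∫ z : Fin n → ℂ,
          (∏ l : Fin r, ∏ k : Fin n,
            ((‖z k‖ ^ 2 : ℝ) : ℂ) ^ (lam l * (α l k : ℂ))) *
          (∏ k : Fin n, (z k) ^ (-(β k : ℤ))) * φ z := by
  simpa only [Complex.ofReal_natCast] using
    stmt12_general φ β (hφ.of_le (by exact_mod_cast le_top)) hsupp (fun l k => (α l k : ℝ))
      (fun l k => (α l k).cast_nonneg) (by exact_mod_cast hβ)
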